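/- Let v_1, …, v_s ∈ ℤ^n (s ≥ 2) be pairwise distinct primitive vectors, λ_1, …, λ_s ∈ ℝ, and l_j(u) = ⟨u, v_j⟩ − λ_j. Let (δ^{(i)})_{i∈ℕ} be a monotonically decreasing sequence of positive real numbers converging to 0. Let T = {u ∈ ℝ^n : the minimum of {l_1(u), …, l_s(u)} is attained by at least two distinct indices} and T^{(i)} = {u ∈ ℝ^n : the minimum of {l_1(u) + δ^{(i)}, l_2(u), …, l_s(u)} is attained by at least two distinct indices}. Then for every ε > 0 there exists ν ∈ ℕ, independent of the points, such that for all i ≥ ν and every u_2 ∈ T^{(i)} there exists u_1 ∈ T with ‖u_1 − u_2‖ < ε. -/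

import Mathlib

open scoped Classical

noncomputable section

/-- Integer inner product `⟨w, v⟩ = ∑ i, w i * v i` on `ℤ^n`. -/
def zdot {n : ℕ} (w v : Fin n → ℤ) : ℤ := ∑ i, w i * v i

/-- A lattice vector is primitive if the gcd of its entries is `1`. -/
def Primitive {n : ℕ} (w : Fin n → ℤ) : Prop := Finset.univ.gcd w = 1

/-- The affine function `l_j(u) = ⟨u, v_j⟩ - λ_j` on Euclidean space. -/
def lfE {n m : ℕ} (v : Fin m → Fin n → ℤ) (lam : Fin m → ℝ) (j : Fin m)
    (u : EuclideanSpace ℝ (Fin n)) : ℝ :=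
  (∑ i, u i * (v j i : ℝ)) - lam j

/-- The tropicalization of the family `{l_1, …, l_s}`: the set of points at which the pointwise
minimum of the family is attained by at least two distinct indices. -/
def TropAll {n s : ℕ} (v : Fin s → Fin n → ℤ) (lam : Fin s → ℝ) :
    Set (EuclideanSpace ℝ (Fin n)) :=
  {u | ∃ j₁ j₂ : Fin s, j₁ ≠ j₂ ∧ lfE v lam j₁ u = lfE v lam j₂ u ∧
        ∀ j : Fin s, lfE v lam j₁ u ≤ lfE v lam j u}

/-- Values of `lfE` along a line. -/
theorem lfE_line {n s : ℕ} (v : Fin s → Fin n → ℤ) (lam : Fin s → ℝ) (k : Fin s)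
    (u w : EuclideanSpace ℝ (Fin n)) (t : ℝ) :
    lfE v lam k (u + t • w) = lfE v lam k u + t * ∑ i, w i * (v k i : ℝ) := by
  simp only [lfE, PiLp.add_apply, PiLp.smul_apply, smul_eq_mul, add_mul, Finset.sum_add_distrib,
    Finset.mul_sum, mul_assoc]
  ring

/-- If `l_z` is the strict minimum at `u`, and `l_j` is the second smallest, at distance `≤ d`,
then some point of the tropicalization lies within `d` of `u`. -/
theorem near_trop {n s : ℕ} (v : Fin s → Fin n → ℤ) (lam : Fin s → ℝ)
    (hdist : Function.Injective v) (z j : Fin s) (hj : j ≠ z) (u : EuclideanSpace ℝ (Fin n))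
    (h1 : ∀ k, k ≠ z → lfE v lam z u ≤ lfE v lam k u) :
    ∃ u₁ ∈ TropAll v lam, dist u₁ u ≤ lfE v lam j u - lfE v lam z u := by
  set w : EuclideanSpace ℝ (Fin n) := WithLp.toLp 2 (fun i => ((v z i - v j i : ℤ) : ℝ)) with hw
  have hwi : ∀ i, w i = ((v z i - v j i : ℤ) : ℝ) := fun i => rfl
  have hN : ‖w‖ ^ 2 = ((∑ i, (v z i - v j i) ^ 2 : ℤ) : ℝ) := by
    rw [EuclideanSpace.real_norm_sq_eq]
    push_cast
    exact Finset.sum_congr rfl fun i _ => by rw [hwi]; push_cast; ring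
  have hN1 : (1 : ℤ) ≤ ∑ i, (v z i - v j i) ^ 2 := by
    obtain ⟨i, hi⟩ : ∃ i, v j i ≠ v z i := by
      by_contra! h
      exact hj (hdist (funext h))
    have h2 : 0 < (v z i - v j i) ^ 2 := by
      have : v z i - v j i ≠ 0 := sub_ne_zero.mpr (Ne.symm hi)
      positivity
    have h3 := Finset.single_le_sum (f := fun i => (v z i - v j i) ^ 2)
      (fun i _ => sq_nonneg _) (Finset.mem_univ i)
    omega
  have hw1 : 1 ≤ ‖w‖ ^ 2 := by rw [hN]; exact_mod_cast hN1
  have hw2 : 1 ≤ ‖w‖ := by nlinarith [norm_nonneg w]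
  have hdiff : (∑ i, w i * (v z i : ℝ)) - ∑ i, w i * (v j i : ℝ) = ‖w‖ ^ 2 := by
    rw [EuclideanSpace.real_norm_sq_eq, ← Finset.sum_sub_distrib]
    exact Finset.sum_congr rfl fun i _ => by rw [hwi]; push_cast; ring
  have hne : (Finset.univ.erase z).Nonempty := ⟨j, by simp [hj]⟩
  set d := lfE v lam j u - lfE v lam z u with hd
  have hd0 : 0 ≤ d := sub_nonneg.mpr (h1 j hj)
  set T := d / ‖w‖ ^ 2 with hT
  have hT0 : 0 ≤ T := by positivity
  have hTd : T * ‖w‖ ^ 2 = d := by rw [hT]; field_simp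
  let h : ℝ → ℝ := fun t => (Finset.univ.erase z).inf' hne
    (fun k => lfE v lam k (u + t • w)) - lfE v lam z (u + t • w)
  have hc : Continuous h := by
    have hk : ∀ k, Continuous fun t : ℝ => lfE v lam k (u + t • w) := by
      intro k
      simp only [lfE_line]
      fun_prop
    exact (Continuous.finset_inf'_apply hne fun k _ => hk k).sub (hk z)
  have h0 : 0 ≤ h 0 := by
    simp only [h, sub_nonneg, zero_smul, add_zero]
    exact Finset.le_inf' _ _ fun k hk => h1 k (Finset.ne_of_mem_erase hk)
  have hT' : h T ≤ 0 := by
    have : (Finset.univ.erase z).inf' hne (fun k => lfE v lam k (u + T • w)) ≤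
      lfE v lam j (u + T • w) := Finset.inf'_le _ (by simp [hj])
    simp only [h]
    rw [lfE_line v lam z]
    rw [lfE_line v lam j] at this
    have h5 := congrArg (fun x => T * x) hdiff
    simp only [mul_sub] at h5
    linarith
  obtain ⟨t, ⟨ht0, htT⟩, ht⟩ := intermediate_value_Icc' hT0 hc.continuousOn ⟨hT', h0⟩
  simp only [h] at ht
  obtain ⟨k, hk, hke⟩ := Finset.exists_mem_eq_inf' hne (fun k => lfE v lam k (u + t • w))
  refine ⟨u + t • w, ⟨z, k, (Finset.ne_of_mem_erase hk).symm, by linarith, fun m => ?_⟩, ?_⟩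
  · by_cases hm : m = z
    · rw [hm]
    · have := Finset.inf'_le (fun k => lfE v lam k (u + t • w))
        (Finset.mem_erase.mpr ⟨hm, Finset.mem_univ m⟩)
      linarith
  · rw [dist_eq_norm, add_sub_cancel_left, norm_smul, Real.norm_of_nonneg ht0]
    calc t * ‖w‖ ≤ T * ‖w‖ ^ 2 := by
          apply mul_le_mul htT _ (norm_nonneg _) hT0
          nlinarith
      _ = d := hTd

/-- With `l_j(u) = ⟨u, v_j⟩ - λ_j` (`s ≥ 2`, pairwise distinct primitive
`v_j`) and `δ^{(i)}` a monotonically decreasing sequence of positive reals tending to `0`, let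
`T` be the tropicalization of `{l_1, …, l_s}` and `T^{(i)}` that of
`{l_1 + δ^{(i)}, l_2, …, l_s}`. For every `ε > 0` there exists `ν`, independent of the points,
such that for all `i ≥ ν` and every `u₂ ∈ T^{(i)}` there is `u₁ ∈ T` with `‖u₁ - u₂‖ < ε`. -/
theorem statement9 {n s : ℕ} (hs : 2 ≤ s)
    (v : Fin s → Fin n → ℤ) (lam : Fin s → ℝ)
    (hdist : Function.Injective v)
    (hprim : ∀ j, Primitive (v j))
    (δ : ℕ → ℝ) (hpos : ∀ i, 0 < δ i) (hmono : Antitone δ)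
    (hδ : Filter.Tendsto δ Filter.atTop (nhds 0)) :
    ∀ ε > (0 : ℝ), ∃ ν : ℕ, ∀ i ≥ ν,
      ∀ u₂ ∈ TropAll v (Function.update lam ⟨0, by omega⟩ (lam ⟨0, by omega⟩ - δ i)),
        ∃ u₁ ∈ TropAll v lam, dist u₁ u₂ < ε := by
  intro ε hε
  obtain ⟨ν, hν⟩ := Filter.eventually_atTop.mp (hδ.eventually (gt_mem_nhds hε))
  refine ⟨ν, fun i hi u hu => ?_⟩
  have hiε := hν i hi
  have hp := hpos i
  generalize (⟨0, by omega⟩ : Fin s) = z at hu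
  obtain ⟨a, b, hab, he, hmin⟩ := hu
  have hz : lfE v (Function.update lam z (lam z - δ i)) z u = lfE v lam z u + δ i := by
    simp [lfE]; ring
  have hk : ∀ k, k ≠ z → lfE v (Function.update lam z (lam z - δ i)) k u = lfE v lam k u := by
    intro k hk
    simp [lfE, hk]
  -- a minimizer different from `z`
  obtain ⟨j, hj, hjmin⟩ : ∃ j, j ≠ z ∧ ∀ k, lfE v (Function.update lam z (lam z - δ i)) j u ≤
      lfE v (Function.update lam z (lam z - δ i)) k u := by
    by_cases ha : a = z
    · exact ⟨b, fun hb => hab (ha.trans hb.symm), fun k => he ▸ hmin k⟩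
    · exact ⟨a, ha, hmin⟩
  have hjz := hjmin z
  rw [hz, hk j hj] at hjz
  by_cases hlt : lfE v lam z u ≤ lfE v lam j u
  · obtain ⟨u₁, hu₁, hd⟩ := near_trop v lam hdist z j hj u (fun k hkz => by
      have := hjmin k
      rw [hk j hj, hk k hkz] at this
      linarith)
    exact ⟨u₁, hu₁, by linarith⟩
  · push Not at hlt
    have haz : a ≠ z := by
      rintro rfl
      have := hmin j
      rw [hz, hk j hj] at this
      linarith
    have hbz : b ≠ z := by
      rintro rfl
      have := hmin j
      rw [he, hz, hk j hj] at this
      linarith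
    refine ⟨u, ⟨a, b, hab, by rw [← hk a haz, ← hk b hbz, he], fun k => ?_⟩, by simpa using hε⟩
    rw [← hk a haz]
    by_cases hkz : k = z
    · have := hmin j
      rw [hk j hj] at this
      rw [hkz]
      linarith
    · rw [← hk k hkz]
      exact hmin k
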